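/- There are exactly 2 conjugacy classes of torsion-free subgroups of PSL(2,ℤ) of index 6 and genus zero. -/

import Mathlib

open Matrix

/-- `SL(2,ℤ)`: the group of 2×2 integer matrices of determinant 1. -/
abbrev SL2Z := Matrix.SpecialLinearGroup (Fin 2) ℤ

instance : Fact (Even (Fintype.card (Fin 2))) := ⟨by simp⟩

/-- The subgroup `{±I}` of `SL(2,ℤ)`. -/
def pmOne : Subgroup SL2Z := Subgroup.zpowers (-1 : SL2Z)

instance : pmOne.Normal := by
  constructor
  intro x hx g
  obtain ⟨n, rfl⟩ := hx
  have h : Commute ((-1 : SL2Z) ^ n) g := (Commute.neg_one_left g).zpow_left n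
  refine ⟨n, ?_⟩
  rw [← h.eq, mul_assoc, mul_inv_cancel, mul_one]

/-- `PSL(2,ℤ)`, the modular group, as the quotient of `SL(2,ℤ)` by `{±I}`. -/
abbrev PSL2Z := SL2Z ⧸ pmOne

/-- The natural projection `ξ : SL(2,ℤ) → PSL(2,ℤ)`. -/
def xi : SL2Z →* PSL2Z := QuotientGroup.mk' pmOne

/-- The element `S` of `PSL(2,ℤ)`, the image of `[[0,-1],[1,0]]`. -/
def Sp : PSL2Z := xi ⟨!![0, -1; 1, 0], by norm_num [Matrix.det_fin_two_of]⟩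

/-- The element `T` of `PSL(2,ℤ)`, the image of `[[1,1],[0,1]]`. -/
def Tp : PSL2Z := xi ⟨!![1, 1; 0, 1], by norm_num [Matrix.det_fin_two_of]⟩

/-- The number of left cosets in `PSL(2,ℤ)/Γ` fixed by `g` (for the
left-multiplication action).  For `g = S` this is `e₂(Γ)`, for `g = S*T` it is `e₃(Γ)`. -/
noncomputable def nFix (g : PSL2Z) (Γ : Subgroup PSL2Z) : ℕ :=
  Nat.card {x : PSL2Z ⧸ Γ // g • x = x}

/-- The number of orbits of the cyclic subgroup generated by `g` on `PSL(2,ℤ)/Γ`.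
For `g = S, S*T, T` these are `c₂(Γ), c₃(Γ), h(Γ)` respectively. -/
noncomputable def nOrb (g : PSL2Z) (Γ : Subgroup PSL2Z) : ℕ :=
  Nat.card (MulAction.orbitRel.Quotient (Subgroup.zpowers g) (PSL2Z ⧸ Γ))

/-- `Γ` has genus zero: `c₂(Γ) + c₃(Γ) + h(Γ) = index(Γ) + 2`. -/
def GenusZero (Γ : Subgroup PSL2Z) : Prop :=
  nOrb Sp Γ + nOrb (Sp * Tp) Γ + nOrb Tp Γ = Γ.index + 2

/-- `Γ` is torsion free: it contains no nontrivial element of finite order. -/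
def TorsionFree (Γ : Subgroup PSL2Z) : Prop :=
  ∀ x ∈ Γ, x ≠ 1 → ¬ IsOfFinOrder x

/-- Two subgroups of a group are conjugate. -/
def SubgroupConj {G : Type*} [Group G] (H K : Subgroup G) : Prop :=
  ∃ g : G, Subgroup.map (MulAut.conj g).toMonoidHom H = K

/-- The number of conjugacy classes of subgroups of `PSL(2,ℤ)` satisfying `P`. -/
noncomputable def countClasses (P : Subgroup PSL2Z → Prop) : ℕ :=
  Nat.card (Quot fun A B : {Γ : Subgroup PSL2Z // P Γ} => SubgroupConj A.1 B.1)

/-- The index of the torsion free subgroup `Γ^tf` associated to `Γ`: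
`index(Γ) + 3·e₂(Γ) + 2·e₃(Γ)`. -/
noncomputable def tfIdx (Γ : Subgroup PSL2Z) : ℕ :=
  Γ.index + 3 * nFix Sp Γ + 2 * nFix (Sp * Tp) Γ

/-! ### Normal forms of the coset action -/

/-- The three possible involutions. -/
def sigP : Fin 3 → Equiv.Perm (Fin 6) :=
  ![⟨![3,2,1,0,5,4], ![3,2,1,0,5,4], by decide, by decide⟩,
    ⟨![3,4,5,0,1,2], ![3,4,5,0,1,2], by decide, by decide⟩,
    ⟨![3,5,4,0,2,1], ![3,5,4,0,2,1], by decide, by decide⟩]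

/-- The standard permutation of cycle type (3,3). -/
def rhoP : Equiv.Perm (Fin 6) :=
  ⟨![1,2,0,4,5,3], ![2,0,1,5,3,4], by decide, by decide⟩

/-- The coset action of `Γ` has normal form number `i`. -/
def HasForm (i : Fin 3) (Γ : Subgroup PSL2Z) : Prop :=
  ∃ e : Fin 6 ≃ PSL2Z ⧸ Γ, (∀ j, Sp • e j = e (sigP i j)) ∧
    (∀ j, (Sp * Tp) • e j = e (rhoP j))

lemma xi_eq_one_iff (A : SL2Z) : xi A = 1 ↔ A = 1 ∨ A = -1 := by
  unfold xi
  rw [QuotientGroup.mk'_apply, QuotientGroup.eq_one_iff]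
  unfold pmOne
  constructor
  · rintro ⟨n, rfl⟩
    rcases Int.even_or_odd n with h | h
    · left; simp [h.neg_one_zpow]
    · right; simp [h.neg_one_zpow]
  · rintro (rfl | rfl)
    · exact one_mem _
    · exact Subgroup.mem_zpowers _

lemma xi_surj : Function.Surjective xi := QuotientGroup.mk'_surjective _

lemma Sp_eq : Sp = xi ModularGroup.S := rfl
lemma Tp_eq : Tp = xi ModularGroup.T := rfl

lemma Sp_sq : Sp * Sp = 1 := by
  rw [Sp_eq, ← map_mul, xi_eq_one_iff]
  decide

lemma Rp_cube : (Sp * Tp) * ((Sp * Tp) * (Sp * Tp)) = 1 := by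
  rw [Sp_eq, Tp_eq, ← map_mul, ← map_mul, ← map_mul, xi_eq_one_iff]
  decide

lemma Sp_ne : Sp ≠ 1 := by
  rw [Sp_eq, Ne, xi_eq_one_iff]
  decide

lemma Rp_ne : Sp * Tp ≠ 1 := by
  rw [Sp_eq, Tp_eq, ← map_mul, Ne, xi_eq_one_iff]
  decide

lemma Tp_eq' : Tp = Sp * (Sp * Tp) := by
  rw [← mul_assoc, Sp_sq, one_mul]

lemma gen : Subgroup.closure {Sp, Sp * Tp} = (⊤ : Subgroup PSL2Z) := by
  have h1 : Subgroup.closure {Sp, Tp} = (⊤ : Subgroup PSL2Z) := by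
    have := MonoidHom.map_closure xi {ModularGroup.S, ModularGroup.T}
    rw [SpecialLinearGroup.SL2Z_generators, Subgroup.map_top_of_surjective _ xi_surj,
      Set.image_pair] at this
    exact this.symm
  rw [eq_top_iff, ← h1, Subgroup.closure_le]
  have hS : Sp ∈ Subgroup.closure {Sp, Sp * Tp} := Subgroup.subset_closure (by simp)
  have hR : Sp * Tp ∈ Subgroup.closure {Sp, Sp * Tp} := Subgroup.subset_closure (by simp)
  rintro x (rfl | rfl)
  · exact hS
  · have := mul_mem hS hR
    rwa [← Tp_eq'] at this

/-- Elements of finite order act without fixed points on cosets of a torsion-free subgroup. -/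
lemma noFix {Γ : Subgroup PSL2Z} (h : TorsionFree Γ) (g : PSL2Z) (hg : g ≠ 1)
    (hf : IsOfFinOrder g) (x : PSL2Z ⧸ Γ) : g • x ≠ x := by
  induction x using QuotientGroup.induction_on with
  | H a =>
    intro hx
    have hx' : ((a : PSL2Z) : PSL2Z ⧸ Γ) = ((g * a : PSL2Z) : PSL2Z ⧸ Γ) := hx.symm
    rw [QuotientGroup.eq] at hx'
    refine h _ hx' ?_ ?_
    · intro h1
      apply hg
      rw [inv_mul_eq_one] at h1
      exact mul_right_cancel (b := a) (by rw [one_mul, ← h1])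
    · have := MonoidHom.isOfFinOrder (MulAut.conj a⁻¹).toMonoidHom hf
      simpa [MulAut.conj_apply, mul_assoc] using this

/-- Only full sets are stable under both generators. -/
lemma stable_univ {Γ : Subgroup PSL2Z} (U : Set (PSL2Z ⧸ Γ)) (x : PSL2Z ⧸ Γ) (hx : x ∈ U)
    (hS : ∀ y, y ∈ U ↔ Sp • y ∈ U) (hR : ∀ y, y ∈ U ↔ (Sp * Tp) • y ∈ U) (z : PSL2Z ⧸ Γ) :
    z ∈ U := by
  have key : ∀ g : PSL2Z, ∀ y, y ∈ U ↔ g • y ∈ U := by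
    intro g
    have hg : g ∈ Subgroup.closure {Sp, Sp * Tp} := by rw [gen]; trivial
    induction hg using Subgroup.closure_induction with
    | mem g hg =>
      rcases hg with rfl | rfl
      · exact hS
      · exact hR
    | one => simp
    | mul a b _ _ ha hb => intro y; rw [mul_smul, ← ha, ← hb]
    | inv a _ ha => intro y; rw [ha (a⁻¹ • y), smul_inv_smul]
  obtain ⟨g, rfl⟩ := MulAction.exists_smul_eq PSL2Z x z
  exact (key g x).mp hx

lemma classify {Γ : Subgroup PSL2Z} (hi : Γ.index = 6) (ht : TorsionFree Γ) :
    ∃ i, HasForm i Γ := by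
  set X := PSL2Z ⧸ Γ with hX
  have hcard : Nat.card X = 6 := hi
  have : Finite X := Nat.finite_of_card_ne_zero (by omega)
  have := Fintype.ofFinite X
  have hS0 : ∀ x : X, Sp • x ≠ x := noFix ht _ Sp_ne
    (isOfFinOrder_iff_pow_eq_one.mpr ⟨2, by norm_num, by rw [pow_two, Sp_sq]⟩)
  have hR0 : ∀ x : X, (Sp * Tp) • x ≠ x := noFix ht _ Rp_ne
    (isOfFinOrder_iff_pow_eq_one.mpr ⟨3, by norm_num, by
      rw [pow_succ', pow_two, Rp_cube]⟩)
  have hS2 : ∀ x : X, Sp • Sp • x = x := by intro x; rw [← mul_smul, Sp_sq, one_smul]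
  have hR3 : ∀ x : X, (Sp * Tp) • (Sp * Tp) • (Sp * Tp) • x = x := by
    intro x; rw [← mul_smul, ← mul_smul, mul_assoc (Sp * Tp), Rp_cube, one_smul]
  have hst := fun U => stable_univ (Γ := Γ) U
  unfold HasForm
  generalize Sp * Tp = R at *
  obtain ⟨s, hs⟩ : ∃ s : X → X, ∀ x, Sp • x = s x := ⟨_, fun _ => rfl⟩
  obtain ⟨r, hr⟩ : ∃ r : X → X, ∀ x, R • x = r x := ⟨_, fun _ => rfl⟩
  change ∀ U : Set X, ∀ x : X, _ → (∀ y : X, _) → (∀ y : X, _) → ∀ z : X, _ at hst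
  change ∃ i, ∃ e : Fin 6 ≃ X, (∀ j, Sp • e j = _) ∧ ∀ j, R • e j = _
  simp only [hs, hr] at *
  clear hs hr hi ht
  -- a point whose image under `s` leaves its `r`-orbit
  obtain ⟨x, h0, h1, h2⟩ : ∃ x : X, s x ≠ x ∧ s x ≠ r x ∧ s x ≠ r (r x) := by
    by_contra! hcon
    obtain ⟨x⟩ : Nonempty X := (Nat.card_pos_iff.mp (by omega)).1
    have hall := hst {x, r x, r (r x)} x (by simp)
      (by
        have hclosed : ∀ y ∈ ({x, r x, r (r x)} : Set X), s y ∈ ({x, r x, r (r x)} : Set X) := by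
          rintro y (rfl | rfl | rfl)
          · have := hcon y (hS0 y); simp only [Set.mem_insert_iff, Set.mem_singleton_iff]; tauto
          · have := hcon (r x) (hS0 _); rw [hR3] at this
            simp only [Set.mem_insert_iff, Set.mem_singleton_iff]; tauto
          · have := hcon (r (r x)) (hS0 _); rw [hR3] at this
            simp only [Set.mem_insert_iff, Set.mem_singleton_iff]; tauto
        intro y
        refine ⟨hclosed y, fun h => ?_⟩
        have := hclosed _ h
        rwa [hS2] at this)
      (by
        have hclosed : ∀ y ∈ ({x, r x, r (r x)} : Set X), r y ∈ ({x, r x, r (r x)} : Set X) := by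
          rintro y (rfl | rfl | rfl) <;> simp [hR3]
        intro y
        refine ⟨hclosed y, fun h => ?_⟩
        have := hclosed _ (hclosed _ h)
        rwa [hR3] at this)
    have huniv : ({x, r x, r (r x)} : Set X) = Set.univ := Set.eq_univ_of_forall hall
    have hle : ({x, r x, r (r x)} : Set X).ncard ≤ 3 := by
      refine (Set.ncard_insert_le _ _).trans ?_
      have := Set.ncard_insert_le (r x) {r (r x)}
      simp at this
      omega
    rw [huniv, Set.ncard_univ] at hle
    omega
  have hrinj : Function.Injective r := by
    intro a b hab
    rw [← hR3 a, ← hR3 b, hab]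
  have hsinj : Function.Injective s := by
    intro a b hab
    rw [← hS2 a, ← hS2 b, hab]
  obtain ⟨y, hy⟩ : ∃ y, y = s x := ⟨_, rfl⟩
  have hsy : s y = x := by rw [hy, hS2]
  rw [← hy] at h0 h1 h2
  have finj : Function.Injective ![x, r x, r (r x), y, r y, r (r y)] := by
    have a1 := hR0 x
    have a2 := hR0 (r x)
    have a3 := hR0 (r (r x))
    have b1 := hR0 y
    have b2 := hR0 (r y)
    have b3 := hR0 (r (r y))
    have a4 := hR3 x
    have b4 := hR3 y
    intro i j hij
    fin_cases i <;> fin_cases j <;> simp at hij ⊢ <;> grind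
  have hbij : Function.Bijective ![x, r x, r (r x), y, r y, r (r y)] := by
    rw [Fintype.bijective_iff_injective_and_card]
    refine ⟨finj, ?_⟩
    rw [← Nat.card_eq_fintype_card (α := X), hcard]; simp
  have hsurj : ∀ z : X, z = x ∨ z = r x ∨ z = r (r x) ∨ z = y ∨ z = r y ∨ z = r (r y) := by
    intro z
    obtain ⟨i, rfl⟩ := hbij.2 z
    fin_cases i <;> simp
  have hrform : ∀ j, r (![x, r x, r (r x), y, r y, r (r y)] j) =
      ![x, r x, r (r x), y, r y, r (r y)] (rhoP j) := by
    intro j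
    fin_cases j <;> simp [rhoP, hR3]
  have fne : ∀ i j : Fin 6, i ≠ j → ![x, r x, r (r x), y, r y, r (r y)] i ≠
    ![x, r x, r (r x), y, r y, r (r y)] j := fun i j h h' => h (finj h')
  have n12 := fne 1 2 (by decide)
  have n45 := fne 4 5 (by decide)
  have n01 := fne 0 1 (by decide)
  have n02 := fne 0 2 (by decide)
  have n14 := fne 1 4 (by decide)
  have n15 := fne 1 5 (by decide)
  have n24 := fne 2 4 (by decide)
  have n25 := fne 2 5 (by decide)
  have n31 := fne 3 1 (by decide)
  have n32 := fne 3 2 (by decide)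
  have n34 := fne 3 4 (by decide)
  have n35 := fne 3 5 (by decide)
  have n04 := fne 0 4 (by decide)
  have n05 := fne 0 5 (by decide)
  simp at n12 n45 n01 n02 n14 n15 n24 n25 n31 n32 n34 n35 n04 n05
  suffices h : ∃ i, ∀ j, s (![x, r x, r (r x), y, r y, r (r y)] j) =
      ![x, r x, r (r x), y, r y, r (r y)] (sigP i j) by
    obtain ⟨i, h⟩ := h
    exact ⟨i, Equiv.ofBijective _ hbij, h, hrform⟩
  have c1 : s (r x) = r (r x) ∨ s (r x) = r y ∨ s (r x) = r (r y) := by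
    have := hsurj (s (r x))
    have := hS0 (r x)
    have : s (r x) ≠ x := fun h => n31 (hsinj (by rw [h, hsy]))
    have : s (r x) ≠ y := fun h => n01 (hsinj (by rw [h, hy]))
    tauto
  rcases c1 with h | h | h
  · have e2 : s (r (r x)) = r x := by rw [← h, hS2]
    have e3 : s (r y) = r (r y) := by
      have := hsurj (s (r y))
      have := hS0 (r y)
      have : s (r y) ≠ x := fun h => n34 (hsinj (by rw [h, hsy]))
      have : s (r y) ≠ y := fun h => n04 (hsinj (by rw [h, hy]))
      have : s (r y) ≠ r x := fun h => n24 (hsinj (by rw [h, e2]))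
      have : s (r y) ≠ r (r x) := fun h' => n14 (hsinj (by rw [h', h]))
      tauto
    have e4 : s (r (r y)) = r y := by rw [← e3, hS2]
    refine ⟨0, fun j => ?_⟩
    fin_cases j <;> simp [sigP, ← hy, hsy, h, e2, e3, e4]
  · have e2 : s (r y) = r x := by rw [← h, hS2]
    have e3 : s (r (r x)) = r (r y) := by
      have := hsurj (s (r (r x)))
      have := hS0 (r (r x))
      have : s (r (r x)) ≠ x := fun h => n32 (hsinj (by rw [h, hsy]))
      have : s (r (r x)) ≠ y := fun h => n02 (hsinj (by rw [h, hy]))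
      have : s (r (r x)) ≠ r x := fun h => n24 (hsinj (by rw [h, e2]))
      have : s (r (r x)) ≠ r y := fun h' => n12 (hsinj (by rw [h', h]))
      tauto
    have e4 : s (r (r y)) = r (r x) := by rw [← e3, hS2]
    refine ⟨1, fun j => ?_⟩
    fin_cases j <;> simp [sigP, ← hy, hsy, h, e2, e3, e4]
  · have e2 : s (r (r y)) = r x := by rw [← h, hS2]
    have e3 : s (r (r x)) = r y := by
      have := hsurj (s (r (r x)))
      have := hS0 (r (r x))
      have : s (r (r x)) ≠ x := fun h => n32 (hsinj (by rw [h, hsy]))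
      have : s (r (r x)) ≠ y := fun h => n02 (hsinj (by rw [h, hy]))
      have : s (r (r x)) ≠ r x := fun h => n25 (hsinj (by rw [h, e2]))
      have : s (r (r x)) ≠ r (r y) := fun h' => n12 (hsinj (by rw [h', h]))
      tauto
    have e4 : s (r y) = r (r x) := by rw [← e3, hS2]
    refine ⟨2, fun j => ?_⟩
    fin_cases j <;> simp [sigP, ← hy, hsy, h, e2, e3, e4]

/-! ### Consequences of the normal forms -/

instance decSameCycle (p : Equiv.Perm (Fin 6)) :
    DecidableRel (α := Fin 6) (fun a b => (Equiv.Perm.SameCycle.setoid p).r a b) :=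
  fun a b => inferInstanceAs (Decidable (Equiv.Perm.SameCycle p a b))

instance fintypeCycles (p : Equiv.Perm (Fin 6)) :
    Fintype (Quotient (Equiv.Perm.SameCycle.setoid p)) :=
  @Quotient.fintype _ _ _ (decSameCycle p)

lemma nOrb_eq {Γ : Subgroup PSL2Z} (e : Fin 6 ≃ PSL2Z ⧸ Γ) (g : PSL2Z)
    (p : Equiv.Perm (Fin 6)) (h : ∀ j, g • e j = e (p j)) :
    nOrb g Γ = Fintype.card (Quotient (Equiv.Perm.SameCycle.setoid p)) := by
  have hz : ∀ n : ℤ, ∀ j, g ^ n • e j = e ((p ^ n) j) := by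
    have h1 : MulAction.toPermHom PSL2Z (PSL2Z ⧸ Γ) g = e.permCongrHom p := by
      ext x
      obtain ⟨j, rfl⟩ := e.surjective x
      simp [h]
    intro n j
    have h2 : MulAction.toPermHom PSL2Z (PSL2Z ⧸ Γ) (g ^ n) = e.permCongrHom (p ^ n) := by
      rw [map_zpow, map_zpow, h1]
    have := congrArg (fun f => f (e j)) h2
    simpa using this
  unfold nOrb
  rw [← Nat.card_eq_fintype_card]
  symm
  refine Nat.card_congr (Quotient.congr e ?_)
  intro a b
  change Equiv.Perm.SameCycle p a b ↔ e a ∈ MulAction.orbit _ (e b)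
  constructor
  · intro hab
    obtain ⟨n, hn⟩ := hab.symm
    refine ⟨⟨g ^ n, n, rfl⟩, ?_⟩
    change g ^ n • e b = e a
    rw [hz, hn]
  · rintro ⟨⟨_, n, rfl⟩, hn⟩
    change g ^ n • e b = e a at hn
    rw [hz] at hn
    exact Equiv.Perm.SameCycle.symm ⟨n, e.injective hn⟩

lemma form_T {i : Fin 3} {Γ : Subgroup PSL2Z} {e : Fin 6 ≃ PSL2Z ⧸ Γ}
    (hS : ∀ j, Sp • e j = e (sigP i j)) (hR : ∀ j, (Sp * Tp) • e j = e (rhoP j)) (j : Fin 6) :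
    Tp • e j = e ((sigP i * rhoP) j) := by
  rw [Tp_eq', mul_smul, hR, hS]; rfl

lemma genus_iff {i : Fin 3} {Γ : Subgroup PSL2Z} (hi : Γ.index = 6) (h : HasForm i Γ) :
    GenusZero Γ ↔ i ≠ 1 := by
  obtain ⟨e, hS, hR⟩ := h
  unfold GenusZero
  rw [nOrb_eq e _ _ hS, nOrb_eq e _ _ hR, nOrb_eq e _ _ (form_T hS hR), hi]
  clear hS hR
  revert i
  decide +kernel

lemma conj_of_form {i : Fin 3} {Γ Δ : Subgroup PSL2Z} (h : HasForm i Γ) (h' : HasForm i Δ) :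
    SubgroupConj Γ Δ := by
  obtain ⟨e, hS, hR⟩ := h
  obtain ⟨f, kS, kR⟩ := h'
  have key : ∀ g : PSL2Z, ∀ j k, g • e j = e k ↔ g • f j = f k := by
    intro g
    have : ∃ p : Equiv.Perm (Fin 6), (∀ j, g • e j = e (p j)) ∧ ∀ j, g • f j = f (p j) := by
      have hg : g ∈ Subgroup.closure {Sp, Sp * Tp} := by rw [gen]; trivial
      induction hg using Subgroup.closure_induction with
      | mem g hg =>
        rcases hg with rfl | rfl
        · exact ⟨_, hS, kS⟩
        · exact ⟨_, hR, kR⟩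
      | one => exact ⟨1, by simp, by simp⟩
      | mul a b _ _ ha hb =>
        obtain ⟨p, h1, h2⟩ := ha
        obtain ⟨q, h3, h4⟩ := hb
        exact ⟨p * q, by simp [mul_smul, h1, h3], by simp [mul_smul, h2, h4]⟩
      | inv a _ ha =>
        obtain ⟨p, h1, h2⟩ := ha
        exact ⟨p⁻¹, by simp [inv_smul_eq_iff, h1], by simp [inv_smul_eq_iff, h2]⟩
    obtain ⟨p, h1, h2⟩ := this
    intro j k
    rw [h1, h2, e.injective.eq_iff, f.injective.eq_iff]
  obtain ⟨a, ha⟩ := QuotientGroup.mk_surjective (e 0)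
  obtain ⟨b, hb⟩ := QuotientGroup.mk_surjective (f 0)
  have mem1 : ∀ g, g • e 0 = e 0 ↔ a⁻¹ * g * a ∈ Γ := by
    intro g
    rw [← ha, eq_comm]
    change ((a : PSL2Z) : PSL2Z ⧸ Γ) = ((g * a : PSL2Z) : PSL2Z ⧸ Γ) ↔ _
    rw [QuotientGroup.eq, mul_assoc]
  have mem2 : ∀ g, g • f 0 = f 0 ↔ b⁻¹ * g * b ∈ Δ := by
    intro g
    rw [← hb, eq_comm]
    change ((b : PSL2Z) : PSL2Z ⧸ Δ) = ((g * b : PSL2Z) : PSL2Z ⧸ Δ) ↔ _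
    rw [QuotientGroup.eq, mul_assoc]
  refine ⟨b⁻¹ * a, ?_⟩
  ext x
  rw [Subgroup.mem_map]
  have h3 := mem2 (b * x * b⁻¹)
  rw [← key, mem1] at h3
  have h4 : b⁻¹ * (b * x * b⁻¹) * b = x := by group
  rw [h4] at h3
  rw [← h3]
  constructor
  · rintro ⟨y, hy, rfl⟩
    convert hy using 1
    simp [MulAut.conj_apply]
    group
  · intro hx
    refine ⟨_, hx, ?_⟩
    simp [MulAut.conj_apply]
    group

/-! ### Torsion-freeness -/

lemma mul_entry (A B : SL2Z) (i j : Fin 2) :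
    (A * B) i j = A i 0 * B 0 j + A i 1 * B 1 j := by
  change (A.1 * B.1) i j = _
  rw [Matrix.mul_apply, Fin.sum_univ_two]

lemma inv_entry (A : SL2Z) : A⁻¹ 1 0 = - A 1 0 ∧ A⁻¹ 1 1 = A 0 0 := by
  change A.1.adjugate 1 0 = _ ∧ A.1.adjugate 1 1 = _
  rw [Matrix.adjugate_fin_two]
  exact ⟨rfl, rfl⟩

lemma pow_form (A : SL2Z) (ht : 2 ≤ |A 0 0 + A 1 1|) (n : ℕ) :
    ∃ u v : ℤ, |v| < |u| ∧ (A ^ (n + 1)) 0 0 = u * A 0 0 + v ∧ (A ^ (n + 1)) 0 1 = u * A 0 1 ∧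
      (A ^ (n + 1)) 1 0 = u * A 1 0 ∧ (A ^ (n + 1)) 1 1 = u * A 1 1 + v := by
  have hdet : A 0 0 * A 1 1 - A 0 1 * A 1 0 = 1 := by
    have := A.det_coe
    rwa [Matrix.det_fin_two] at this
  induction n with
  | zero => exact ⟨1, 0, by simp, by simp, by simp, by simp, by simp⟩
  | succ n ih =>
    obtain ⟨u, v, huv, h1, h2, h3, h4⟩ := ih
    refine ⟨u * (A 0 0 + A 1 1) + v, -u, ?_, ?_, ?_, ?_, ?_⟩
    · rw [abs_neg]
      have h5 : |u * (A 0 0 + A 1 1)| - |v| ≤ |u * (A 0 0 + A 1 1) + v| := by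
        have := abs_sub_abs_le_abs_sub (u * (A 0 0 + A 1 1)) (-v)
        simpa using this
      rw [abs_mul] at h5
      nlinarith [abs_nonneg u]
    all_goals
      rw [pow_succ, mul_entry]
      simp only [h1, h2, h3, h4]
    · linear_combination (-u) * hdet
    · ring
    · ring
    · linear_combination (-u) * hdet

lemma tf_elt (A : SL2Z) (ha : Odd (A 0 0)) (hbc : 4 ∣ A 0 1 * A 1 0) (h1 : xi A ≠ 1) :
    ¬ IsOfFinOrder (xi A) := by
  intro hf
  have hdet : A 0 0 * A 1 1 - A 0 1 * A 1 0 = 1 := by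
    have := A.det_coe
    rwa [Matrix.det_fin_two] at this
  have hd : Odd (A 1 1) := by
    by_contra hd
    rw [Int.not_odd_iff_even] at hd
    have h2 : Even (A 0 0 * A 1 1) := hd.mul_left _
    have h3 : Even (A 0 1 * A 1 0) := by
      obtain ⟨k, hk⟩ := hbc
      exact ⟨2 * k, by rw [hk]; ring⟩
    have := h2.sub h3
    rw [hdet] at this
    exact absurd this (by decide)
  have ht : 2 ≤ |A 0 0 + A 1 1| := by
    have hev := ha.add_odd hd
    have hne : A 0 0 + A 1 1 ≠ 0 := by
      intro h0
      have hd' : A 1 1 = - A 0 0 := by linarith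
      rw [hd'] at hdet
      obtain ⟨k, hk⟩ := ha
      obtain ⟨m, hm⟩ := hbc
      rw [hm, hk] at hdet
      ring_nf at hdet
      omega
    obtain ⟨k, hk⟩ := hev
    rw [hk] at hne ⊢
    rw [← two_mul, abs_mul]
    have : 1 ≤ |k| := Int.one_le_abs (by intro h; simp [h] at hne)
    simp
    omega
  obtain ⟨n, hn, hpow⟩ := isOfFinOrder_iff_pow_eq_one.mp hf
  obtain ⟨n, rfl⟩ : ∃ m, n = m + 1 := ⟨n - 1, by omega⟩
  rw [← map_pow, xi_eq_one_iff] at hpow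
  obtain ⟨u, v, huv, e1, e2, e3, e4⟩ := pow_form A ht n
  have hu : u ≠ 0 := by
    rintro rfl
    have := abs_nonneg v
    simp at huv
    omega
  have key : u * A 0 1 = 0 ∧ u * A 1 0 = 0 ∧ u * A 0 0 + v = u * A 1 1 + v := by
    rw [← e1, ← e2, ← e3, ← e4]
    rcases hpow with h | h <;> rw [h] <;> simp
  obtain ⟨k1, k2, k3⟩ := key
  have k1 : A 0 1 = 0 := by simpa [hu] using k1
  have k2 : A 1 0 = 0 := by simpa [hu] using k2
  have k3 : A 0 0 = A 1 1 := by
    have : u * A 0 0 = u * A 1 1 := by linarith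
    exact mul_left_cancel₀ hu this
  rw [k1, k3] at hdet
  apply h1
  rw [xi_eq_one_iff]
  have : A 1 1 = 1 ∨ A 1 1 = -1 := by
    have : A 1 1 * A 1 1 = 1 := by linarith
    exact mul_self_eq_one_iff.mp this
  rcases this with h | h
  · left
    ext i j
    fin_cases i <;> fin_cases j <;> simp [k1, k2, k3, h]
  · right
    ext i j
    fin_cases i <;> fin_cases j <;> simp [k1, k2, k3, h]

lemma tf_map (H : Subgroup SL2Z) (h : ∀ A ∈ H, Odd (A 0 0) ∧ 4 ∣ A 0 1 * A 1 0) :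
    TorsionFree (H.map xi) := by
  rintro _ ⟨A, hA, rfl⟩ h1
  exact tf_elt A (h A hA).1 (h A hA).2 h1

/-! ### The two examples -/

lemma index_six {G α : Type*} [Group G] (H : Subgroup G) (F : G → α)
    (hα : Nat.card α = 6) (hF : Function.Surjective F) (h : ∀ a b, F a = F b ↔ a⁻¹ * b ∈ H) :
    H.index = 6 := by
  rw [← hα]
  refine Nat.card_congr (Equiv.ofBijective
    (Quotient.lift F fun a b hab => (h a b).mpr (QuotientGroup.leftRel_apply.mp hab)) ⟨?_, ?_⟩)
  · rintro ⟨a⟩ ⟨b⟩ hab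
    exact QuotientGroup.eq.mpr ((h a b).mp hab)
  · intro y
    obtain ⟨a, rfl⟩ := hF y
    exact ⟨Quotient.mk _ a, rfl⟩

lemma index_map_xi (H : Subgroup SL2Z) (h : -1 ∈ H) : (H.map xi).index = H.index := by
  refine Subgroup.index_map_eq _ xi_surj ?_
  intro A hA
  rcases (xi_eq_one_iff A).mp hA with rfl | rfl
  · exact one_mem _
  · exact h

lemma mem_map_xi (H : Subgroup SL2Z) (h : -1 ∈ H) (A : SL2Z) : xi A ∈ H.map xi ↔ A ∈ H := by
  refine ⟨?_, fun hA => ⟨A, hA, rfl⟩⟩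
  rintro ⟨B, hB, hAB⟩
  have h1 : xi (B⁻¹ * A) = 1 := by rw [map_mul, map_inv, hAB, inv_mul_cancel]
  have h2 : B⁻¹ * A ∈ H := by
    rcases (xi_eq_one_iff _).mp h1 with h1 | h1 <;> rw [h1]
    · exact one_mem _
    · exact h
  simpa using mul_mem hB h2

open CongruenceSubgroup

/-- The level two subgroup in `PSL(2,ℤ)`. -/
def G2 : Subgroup PSL2Z := (Gamma 2).map xi

/-- The subgroup of `PSL(2,ℤ)` given by `Γ₀(4)`. -/
def G4 : Subgroup PSL2Z := (Gamma0 4).map xi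

lemma neg_mem2 : (-1 : SL2Z) ∈ Gamma 2 := by
  rw [Gamma_mem]; decide

lemma neg_mem4 : (-1 : SL2Z) ∈ Gamma0 4 := by
  rw [Gamma0_mem]; decide

lemma tf2 : TorsionFree G2 := by
  apply tf_map
  intro A hA
  rw [Gamma_mem] at hA
  obtain ⟨h1, h2, h3, -⟩ := hA
  refine ⟨?_, ?_⟩
  · rw [← ZMod.intCast_eq_one_iff_odd]; exact h1
  · have a := (ZMod.intCast_zmod_eq_zero_iff_dvd _ _).mp h2
    have b := (ZMod.intCast_zmod_eq_zero_iff_dvd _ _).mp h3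
    exact mul_dvd_mul a b

lemma tf4 : TorsionFree G4 := by
  apply tf_map
  intro A hA
  rw [Gamma0_mem] at hA
  have b := (ZMod.intCast_zmod_eq_zero_iff_dvd _ _).mp hA
  have hdet : A 0 0 * A 1 1 - A 0 1 * A 1 0 = 1 := by
    have := A.det_coe
    rwa [Matrix.det_fin_two] at this
  have hb : (4 : ℤ) ∣ A 0 1 * A 1 0 := Dvd.dvd.mul_left b _
  refine ⟨?_, hb⟩
  by_contra ha
  rw [Int.not_odd_iff_even] at ha
  have h2 : Even (A 0 0 * A 1 1) := ha.mul_right _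
  obtain ⟨k, hk⟩ := hb
  obtain ⟨m, hm⟩ := h2
  omega

lemma det_mod (N : ℕ) (A : SL2Z) :
    (A 0 0 : ZMod N) * A 1 1 - (A 0 1 : ZMod N) * A 1 0 = 1 := by
  have := A.det_coe
  rw [Matrix.det_fin_two] at this
  exact_mod_cast congrArg (Int.cast : ℤ → ZMod N) this

lemma index2 : G2.index = 6 := by
  unfold G2
  rw [index_map_xi _ neg_mem2]
  refine index_six (α := {p : ZMod 2 × ZMod 2 × ZMod 2 × ZMod 2 //
    p.1 * p.2.2.2 - p.2.1 * p.2.2.1 = 1}) _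
    (fun A => ⟨(A 0 0, A 0 1, A 1 0, A 1 1), det_mod 2 A⟩) ?_ ?_ ?_
  · rw [Nat.card_eq_fintype_card]
    decide +kernel
  · have hd : ∀ a b c d : ZMod 2, a * d - b * c = 1 → ∃ i j k : Fin 2, ∃ l : Fin 2,
        ∃ A : SL2Z, A = ModularGroup.T ^ i.1 * ModularGroup.S ^ l.1 *
          ModularGroup.T ^ j.1 * ModularGroup.S * ModularGroup.T ^ k.1 ∧
        ((A 0 0 : ℤ) : ZMod 2) = a ∧ ((A 0 1 : ℤ) : ZMod 2) = b ∧ ((A 1 0 : ℤ) : ZMod 2) = c ∧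
        ((A 1 1 : ℤ) : ZMod 2) = d := by
      simp only [exists_eq_left]
      decide +kernel
    rintro ⟨⟨a, b, c, d⟩, h⟩
    obtain ⟨i, j, k, l, A, -, h1, h2, h3, h4⟩ := hd a b c d h
    exact ⟨A, Subtype.ext (by simp [h1, h2, h3, h4])⟩
  · intro A B
    change _ ↔ A⁻¹ * B ∈ MonoidHom.ker _
    rw [MonoidHom.mem_ker, map_mul, map_inv, inv_mul_eq_one]
    rw [Subtype.ext_iff]
    simp only [Prod.mk.injEq]
    constructor
    · rintro ⟨h1, h2, h3, h4⟩
      apply Matrix.SpecialLinearGroup.ext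
      intro i j
      fin_cases i <;> fin_cases j
      · exact h1
      · exact h2
      · exact h3
      · exact h4
    · intro h
      have h' : ∀ i j : Fin 2, ((A i j : ℤ) : ZMod 2) = ((B i j : ℤ) : ZMod 2) := fun i j =>
        congrArg (fun M : Matrix.SpecialLinearGroup (Fin 2) (ZMod 2) => M i j) h
      exact ⟨h' 0 0, h' 0 1, h' 1 0, h' 1 1⟩

lemma index4 : G4.index = 6 := by
  unfold G4
  rw [index_map_xi _ neg_mem4]
  -- the first column modulo `4`, up to sign
  let F : ZMod 4 → ZMod 4 → Fin 6 := fun a c =>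
    if c = 0 then 0 else if c = 2 then 1 else if a * c = 0 then 2 else
      if a * c = 1 then 3 else if a * c = 2 then 4 else 5
  have hF : ∀ a c a' c' : ZMod 4, (∃ b d, a * d - b * c = 1) → (∃ b d, a' * d - b * c' = 1) →
      (F a c = F a' c' ↔ -c * a' + a * c' = 0) := by
    decide +kernel
  have hdec : ∀ y : Fin 6, ∃ i j l : Fin 4,
      F (((ModularGroup.T ^ i.1 * ModularGroup.S ^ l.1 * ModularGroup.T ^ j.1 * ModularGroup.S :
        SL2Z) 0 0 : ℤ) : ZMod 4) (((ModularGroup.T ^ i.1 * ModularGroup.S ^ l.1 *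
        ModularGroup.T ^ j.1 * ModularGroup.S : SL2Z) 1 0 : ℤ) : ZMod 4) = y := by
    decide +kernel
  refine index_six _ (fun A => F (A 0 0) (A 1 0)) (by simp) ?_ ?_
  · intro y
    obtain ⟨i, j, l, h⟩ := hdec y
    exact ⟨_, h⟩
  · intro A B
    rw [hF _ _ _ _ ⟨_, _, det_mod 4 A⟩ ⟨_, _, det_mod 4 B⟩, Gamma0_mem]
    rw [mul_entry, (inv_entry A).1, (inv_entry A).2]
    push_cast
    rfl

lemma normal2 : G2.Normal := (Gamma_normal 2).map _ xi_surj

lemma form2 : HasForm 2 G2 := by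
  obtain ⟨i, hi⟩ := classify index2 tf2
  suffices i = 2 by rwa [this] at hi
  obtain ⟨e, hS, hR⟩ := hi
  have hT := form_T hS hR
  have hTT : Tp * Tp ∈ G2 := by
    rw [Tp_eq, ← map_mul]
    refine ⟨_, ?_, rfl⟩
    change _ ∈ Gamma 2
    rw [Gamma_mem]
    decide
  have h2 : ∀ j, (sigP i * rhoP) ((sigP i * rhoP) j) = j := by
    intro j
    apply e.injective
    rw [← hT, ← hT, ← mul_smul]
    obtain ⟨a, ha⟩ := QuotientGroup.mk_surjective (e j)
    rw [← ha, eq_comm]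
    change ((a : PSL2Z) : PSL2Z ⧸ G2) = ((Tp * Tp * a : PSL2Z) : PSL2Z ⧸ G2)
    rw [QuotientGroup.eq]
    have := normal2.conj_mem _ hTT a⁻¹
    simpa [mul_assoc] using this
  clear hS hR hT
  revert i
  decide +kernel

lemma T_mem4 : Tp ∈ G4 := by
  refine ⟨ModularGroup.T, ?_, rfl⟩
  change _ ∈ Gamma0 4
  rw [Gamma0_mem]
  decide

lemma form4 : HasForm 0 G4 := by
  obtain ⟨i, hi⟩ := classify index4 tf4
  suffices i = 0 by rwa [this] at hi
  obtain ⟨e, hS, hR⟩ := hi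
  have hT := form_T hS hR
  have h2 : ∃ j, (sigP i * rhoP) j = j := by
    obtain ⟨j, hj⟩ := e.surjective ((1 : PSL2Z) : PSL2Z ⧸ G4)
    refine ⟨j, e.injective ?_⟩
    rw [← hT, hj, eq_comm]
    change ((1 : PSL2Z) : PSL2Z ⧸ G4) = ((Tp * 1 : PSL2Z) : PSL2Z ⧸ G4)
    rw [QuotientGroup.eq]
    simpa using T_mem4
  clear hS hR hT
  revert i
  decide +kernel

lemma T_not_mem2 : Tp ∉ G2 := by
  rw [Tp_eq, G2, mem_map_xi _ neg_mem2, Gamma_mem]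
  decide

/-- There are exactly 2 conjugacy classes of torsion-free genus-zero subgroups of
`PSL(2,ℤ)` of index 6. -/
theorem count_tf_index_six :
    countClasses (fun Γ => Γ.index = 6 ∧ GenusZero Γ ∧ TorsionFree Γ) = 2 := by
  unfold countClasses
  rw [Nat.card_eq_two_iff]
  refine ⟨Quot.mk _ ⟨G2, index2, (genus_iff index2 form2).mpr (by decide), tf2⟩,
    Quot.mk _ ⟨G4, index4, (genus_iff index4 form4).mpr (by decide), tf4⟩, ?_, ?_⟩
  · intro h
    have hl : ∀ A B : {Γ : Subgroup PSL2Z // Γ.index = 6 ∧ GenusZero Γ ∧ TorsionFree Γ},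
        SubgroupConj A.1 B.1 → (A.1 = G2) = (B.1 = G2) := by
      rintro ⟨A, hA⟩ ⟨B, hB⟩ ⟨g, hg⟩
      change Subgroup.map _ A = B at hg
      have := normal2
      have h2 : Subgroup.map (MulAut.conj g).toMonoidHom G2 = G2 :=
        Subgroup.Normal.map_conj_eq G2 g
      have hinj : Function.Injective (Subgroup.map (MulAut.conj g).toMonoidHom) :=
        Subgroup.map_injective (MulAut.conj g).injective
      apply propext
      change A = G2 ↔ B = G2
      rw [← hg]
      constructor
      · rintro rfl; exact h2
      · intro h; exact hinj (h.trans h2.symm)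
    have := congrArg (Quot.lift (fun A => A.1 = G2) hl) h
    change (G2 = G2) = (G4 = G2) at this
    have h42 : G4 = G2 := this ▸ rfl
    exact T_not_mem2 (h42 ▸ T_mem4)
  · rw [Set.eq_univ_iff_forall]
    rintro ⟨Γ, hi, hg, ht⟩
    obtain ⟨i, hf⟩ := classify hi ht
    have h1 := (genus_iff hi hf).mp hg
    have : i = 0 ∨ i = 2 := by
      clear hf
      revert i
      decide
    rcases this with rfl | rfl
    · right
      exact Quot.sound (conj_of_form hf form4)
    · left
      exact Quot.sound (conj_of_form hf form2)
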